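/- Shallow splitting for seq in BVr: for all structures R, T, P, if there is a BVr proof of [⟨R;T⟩;P], then there exist structures P1, P2 such that there is a BVr derivation from ⟨P1;P2⟩ to P, a BVr proof of [R;P1], and a BVr proof of [T;P2]. -/

import Mathlib

namespace DI

/-- SBVr structures: unit, atoms and their duals, par, copar, seq, renaming binder. -/
inductive Struct : Type
  | unit : Struct
  | atom : ℕ → Struct
  | natom : ℕ → Struct
  | par : Struct → Struct → Struct
  | copar : Struct → Struct → Struct
  | seq : Struct → Struct → Struct
  | ren : ℕ → Struct → Struct
  deriving DecidableEq

namespace Struct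

/-- Negation of structures (De Morgan: swaps par/copar, fixes seq and renaming). -/
def neg : Struct → Struct
  | unit => unit
  | atom a => natom a
  | natom a => atom a
  | par R T => copar R.neg T.neg
  | copar R T => par R.neg T.neg
  | seq R T => seq R.neg T.neg
  | ren a R => ren a R.neg

/-- Free atom names of a structure. -/
def free : Struct → Finset ℕ
  | unit => ∅
  | atom a => {a}
  | natom a => {a}
  | par R T => R.free ∪ T.free
  | copar R T => R.free ∪ T.free
  | seq R T => R.free ∪ T.free
  | ren a R => R.free.erase a

/-- All atom names occurring in a structure (free, bound, and binder names). -/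
def names : Struct → Finset ℕ
  | unit => ∅
  | atom a => {a}
  | natom a => {a}
  | par R T => R.names ∪ T.names
  | copar R T => R.names ∪ T.names
  | seq R T => R.names ∪ T.names
  | ren a R => insert a R.names

/-- `rename b a R` is `R{b/a}`: replace each free occurrence of atom `a` by `b`
(and `ā` by `b̄`). -/
def rename (b a : ℕ) : Struct → Struct
  | unit => unit
  | atom c => if c = a then atom b else atom c
  | natom c => if c = a then natom b else natom c
  | par R T => par (rename b a R) (rename b a T)
  | copar R T => copar (rename b a R) (rename b a T)
  | seq R T => seq (rename b a R) (rename b a T)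
  | ren c R => if c = a then ren c R else ren c (rename b a R)

/-- Size of a structure: the number of occurrences of atoms in it. -/
def size : Struct → ℕ
  | unit => 0
  | atom _ => 1
  | natom _ => 1
  | par R T => R.size + T.size
  | copar R T => R.size + T.size
  | seq R T => R.size + T.size
  | ren _ R => R.size

end Struct

open Struct

/-- Structural congruence on structures. -/
inductive Cong : Struct → Struct → Prop
  | refl (R) : Cong R R
  | symm : Cong R T → Cong T R
  | trans : Cong R T → Cong T U → Cong R U
  | par_congr : Cong R R' → Cong T T' → Cong (par R T) (par R' T')
  | copar_congr : Cong R R' → Cong T T' → Cong (copar R T) (copar R' T')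
  | seq_congr : Cong R R' → Cong T T' → Cong (seq R T) (seq R' T')
  | ren_congr (a) : Cong R R' → Cong (ren a R) (ren a R')
  | par_comm (R T) : Cong (par R T) (par T R)
  | par_assoc (R T U) : Cong (par (par R T) U) (par R (par T U))
  | par_unit (R) : Cong (par R unit) R
  | copar_comm (R T) : Cong (copar R T) (copar T R)
  | copar_assoc (R T U) : Cong (copar (copar R T) U) (copar R (copar T U))
  | copar_unit (R) : Cong (copar R unit) R
  | seq_assoc (R T U) : Cong (seq (seq R T) U) (seq R (seq T U))
  | seq_unit_r (R) : Cong (seq R unit) R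
  | seq_unit_l (R) : Cong (seq unit R) R
  /-- `R ≈ ⌊a⌋(R{a/b})` for a capture-free substitution of `a` for `b`. -/
  | ren_intro (a b : ℕ) (R : Struct) : a ∉ R.names →
      Cong R (ren a (R.rename a b))
  /-- α-equivalence of renaming. -/
  | ren_alpha (a b : ℕ) (R : Struct) : a ∉ R.names →
      Cong (ren b R) (ren a (R.rename a b))
  /-- Vacuous renaming. -/
  | ren_vac (a : ℕ) (R : Struct) : a ∉ R.free → Cong (ren a R) R
  /-- Commutation of renaming binders. -/
  | ren_comm (a b : ℕ) (R : Struct) : Cong (ren a (ren b R)) (ren b (ren a R))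

/-- Names of the inference rules of SBVr. -/
inductive RuleName : Type
  | aiDown | qDown | sw | rDown | aiUp | qUp | rUp
  deriving DecidableEq

/-- Shallow rule instances, read top-down: `Shallow ρ T R` means the rule `ρ`
has premise `T` and conclusion `R`. -/
inductive Shallow : RuleName → Struct → Struct → Prop
  | aiDown (a) : Shallow .aiDown unit (par (atom a) (natom a))
  | qDown (R T U V) :
      Shallow .qDown (seq (par R T) (par U V)) (par (seq R U) (seq T V))
  | sw (R T U) : Shallow .sw (copar (par R U) T) (par (copar R T) U)
  | rDown (a R T) :
      Shallow .rDown (ren a (par R T)) (par (ren a R) (ren a T))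
  | aiUp (a) : Shallow .aiUp (copar (atom a) (natom a)) unit
  | qUp (R T U V) :
      Shallow .qUp (copar (seq R T) (seq U V)) (seq (copar R U) (copar T V))
  | rUp (a R T) :
      Shallow .rUp (copar (ren a R) (ren a T)) (ren a (copar R T))

/-- Closure of a (premise, conclusion) relation under arbitrary contexts
and structural congruence. -/
inductive CtxClosure (r : Struct → Struct → Prop) : Struct → Struct → Prop
  | base : r T R → CtxClosure r T R
  | parL (U) : CtxClosure r T R → CtxClosure r (par T U) (par R U)
  | parR (U) : CtxClosure r T R → CtxClosure r (par U T) (par U R)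
  | coparL (U) : CtxClosure r T R → CtxClosure r (copar T U) (copar R U)
  | coparR (U) : CtxClosure r T R → CtxClosure r (copar U T) (copar U R)
  | seqL (U) : CtxClosure r T R → CtxClosure r (seq T U) (seq R U)
  | seqR (U) : CtxClosure r T R → CtxClosure r (seq U T) (seq U R)
  | ren (a) : CtxClosure r T R → CtxClosure r (ren a T) (ren a R)
  | congr : Cong T T' → CtxClosure r T' R' → Cong R' R → CtxClosure r T R

/-- One inference step in a system given by a set of rule names. -/
def Step (rules : RuleName → Prop) : Struct → Struct → Prop :=
  CtxClosure (fun T R => ∃ ρ, rules ρ ∧ Shallow ρ T R)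

/-- `Deriv rules T R`: there is a derivation in the system `rules` with
premise `T` and conclusion `R` (a finite composition of rule instances,
modulo structural congruence). -/
def Deriv (rules : RuleName → Prop) (T R : Struct) : Prop :=
  Relation.ReflTransGen (fun X Y => Step rules X Y ∨ Cong X Y) T R

/-- `Prov rules R`: `R` is provable, i.e. derivable from the unit. -/
def Prov (rules : RuleName → Prop) (R : Struct) : Prop :=
  Deriv rules unit R

/-- The system BVr: the down rules ai↓, q↓, s, r↓. -/
def BVr : RuleName → Prop := fun ρ =>
  ρ = .aiDown ∨ ρ = .qDown ∨ ρ = .sw ∨ ρ = .rDown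

/-- The system SBVr: BVr plus the up rules ai↑, q↑, r↑. -/
def SBVr : RuleName → Prop := fun _ => True

/-- The system SBV: the renaming-free fragment ai↓, q↓, s, ai↑, q↑. -/
def SBV : RuleName → Prop := fun ρ => ρ ≠ .rDown ∧ ρ ≠ .rUp

/-- BVr extended with the up rule q↑. -/
def BVrQ : RuleName → Prop := fun ρ => BVr ρ ∨ ρ = .qUp

/-- Contexts: structures with a single hole. -/
inductive Ctx : Type
  | hole : Ctx
  | parL (C : Ctx) (U : Struct) : Ctx
  | parR (U : Struct) (C : Ctx) : Ctx
  | coparL (C : Ctx) (U : Struct) : Ctx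
  | coparR (U : Struct) (C : Ctx) : Ctx
  | seqL (C : Ctx) (U : Struct) : Ctx
  | seqR (U : Struct) (C : Ctx) : Ctx
  | ren (a : ℕ) (C : Ctx) : Ctx

/-- Filling the hole of a context with a structure. -/
def Ctx.fill : Ctx → Struct → Struct
  | .hole, V => V
  | .parL C U, V => .par (C.fill V) U
  | .parR U C, V => .par U (C.fill V)
  | .coparL C U, V => .copar (C.fill V) U
  | .coparR U C, V => .copar U (C.fill V)
  | .seqL C U, V => .seq (C.fill V) U
  | .seqR U C, V => .seq U (C.fill V)
  | .ren a C, V => .ren a (C.fill V)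

/-- The renaming binders a context places over its hole. -/
def Ctx.binders : Ctx → Finset ℕ
  | .hole => ∅
  | .parL C _ => C.binders
  | .parR _ C => C.binders
  | .coparL C _ => C.binders
  | .coparR _ C => C.binders
  | .seqL C _ => C.binders
  | .seqR _ C => C.binders
  | .ren a C => insert a C.binders

/-- Lambda terms with explicit substitutions:
variables, abstractions, applications, and explicit substitutions `M⟨x:=P⟩`. -/
inductive Term : Type
  | var : ℕ → Term
  | lam : ℕ → Term → Term
  | app : Term → Term → Term
  | esub : Term → ℕ → Term → Term
  deriving DecidableEq

namespace Term

/-- Free variables of a term. -/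
def fv : Term → Finset ℕ
  | var x => {x}
  | lam x M => M.fv.erase x
  | app M N => M.fv ∪ N.fv
  | esub M x P => M.fv.erase x ∪ P.fv

/-- All variable names occurring in a term (free or bound). -/
def names : Term → Finset ℕ
  | var x => {x}
  | lam x M => insert x M.names
  | app M N => M.names ∪ N.names
  | esub M x P => insert x (M.names ∪ P.names)

/-- Linearity: bound variables occur free in their scope exactly once, and the
free variables of the components of applications and substitutions are disjoint. -/
def Linear : Term → Prop
  | var _ => True
  | lam x M => x ∈ M.fv ∧ M.Linear
  | app M N => M.Linear ∧ N.Linear ∧ Disjoint M.fv N.fv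
  | esub M x P => x ∈ M.fv ∧ M.Linear ∧ P.Linear ∧ Disjoint M.fv P.fv

end Term

/-- β-reduction with explicit substitutions. -/
inductive Beta : Term → Term → Prop
  | intro (x M N) : Beta (.app (.lam x M) N) (.esub M x N)
  | var (x P) : Beta (.esub (.var x) x P) P
  | lam (y x M P) : Beta (.esub (.lam y M) x P) (.lam y (.esub M x P))
  | appR (M N x P) : x ∈ N.fv → Beta (.esub (.app M N) x P) (.app M (.esub N x P))
  | appL (M N x P) : x ∈ M.fv → Beta (.esub (.app M N) x P) (.app (.esub M x P) N)

/-- The rewriting relation `M ⇒ N`: reflexive, contextual and transitive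
closure of β-reduction with explicit substitutions. -/
inductive Red : Term → Term → Prop
  | refl (M) : Red M M
  | beta : Beta M N → Red M N
  | trans : Red M P → Red P N → Red M N
  | lam (x) : Red M N → Red (.lam x M) (.lam x N)
  | appL : Red M N → Red (.app M P) (.app N P)
  | appR : Red M N → Red (.app P M) (.app P N)
  | esubL (x) : Red M N → Red (.esub M x P) (.esub N x P)
  | esubR (x) : Red M N → Red (.esub P x M) (.esub P x N)

/-- A name fresh for a given finite set of names. -/
def freshName (s : Finset ℕ) : ℕ := (s.sup id) + 1

/-- The map `⟦·⟧` from linear lambda terms with explicit substitutions to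
SBVr structures; `Term.tr M o` is `⟦M⟧o`. -/
def Term.tr : Term → ℕ → Struct
  | .var x, o => .seq (.atom x) (.natom o)
  | .lam x M, o =>
      let p := freshName (insert o (insert x M.names))
      .ren x (.ren p (.par (M.tr p) (.copar (.atom p) (.natom o))))
  | .app M N, o =>
      let q := freshName (insert o (M.names ∪ N.names))
      let p := freshName (insert q (insert o (M.names ∪ N.names)))
      .ren p (.par (M.tr p) (.par (.ren q (N.tr q)) (.copar (.atom p) (.natom o))))
  | .esub M x P, o => .ren x (.par (M.tr o) (P.tr x))

/-- The derived rules (premise, conclusion) on translated terms: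
o-ren, s-intro, s-var, s-λ, s-@l, s-@r. -/
inductive DerivedRule : Struct → Struct → Prop
  | oren (M : Term) (o p : ℕ) : p ∉ M.names → p ≠ o →
      DerivedRule (M.tr o) (.par (M.tr p) (.copar (.atom p) (.natom o)))
  | sIntro (M N : Term) (x o : ℕ) :
      DerivedRule ((Term.esub M x N).tr o) ((Term.app (.lam x M) N).tr o)
  | sVar (P : Term) (x o : ℕ) :
      DerivedRule (P.tr o) ((Term.esub (.var x) x P).tr o)
  | sLam (M P : Term) (x y o : ℕ) :
      DerivedRule ((Term.lam y (.esub M x P)).tr o) ((Term.esub (.lam y M) x P).tr o)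
  | sAppL (M N P : Term) (x o : ℕ) : x ∈ M.fv →
      DerivedRule ((Term.app (.esub M x P) N).tr o) ((Term.esub (.app M N) x P).tr o)
  | sAppR (M N P : Term) (x o : ℕ) : x ∈ N.fv →
      DerivedRule ((Term.app M (.esub N x P)).tr o) ((Term.esub (.app M N) x P).tr o)

/-- Derivations composed only of instances of the derived rules
(applied in arbitrary contexts, modulo congruence). -/
def DerivedDeriv : Struct → Struct → Prop :=
  Relation.ReflTransGen (fun X Y => CtxClosure DerivedRule X Y ∨ Cong X Y)

end DI

namespace DI

/-! Semantic proof: interpret structures as Chu pairs of derivation-closed sets of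
structures, and read splitting off the interpretation of `seq`. -/

/-- The congruence as a setoid, with par as a commutative monoid on the quotient. -/
def congSetoid : Setoid Struct := ⟨Cong, Cong.refl, Cong.symm, Cong.trans⟩

def ParQ : Type := Quotient congSetoid

def toQ (X : Struct) : ParQ := Quotient.mk congSetoid X

theorem cong_of_toQ {X Y : Struct} (h : toQ X = toQ Y) : Cong X Y :=
  Quotient.exact (s := congSetoid) h

instance : Add ParQ :=
  ⟨Quotient.map₂ Struct.par (fun _ _ h _ _ h' => Cong.par_congr h h')⟩

instance : Zero ParQ := ⟨toQ .unit⟩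

theorem toQ_par (X Y : Struct) : toQ (.par X Y) = toQ X + toQ Y := rfl

theorem toQ_unit : toQ .unit = 0 := rfl

theorem parQ_comm (x y : ParQ) : x + y = y + x := by
  refine Quotient.inductionOn₂ x y fun X Y => ?_
  exact Quotient.sound (s := congSetoid) (Cong.par_comm X Y)

theorem parQ_zero (x : ParQ) : x + 0 = x := by
  refine Quotient.inductionOn x fun X => ?_
  exact Quotient.sound (s := congSetoid) (Cong.par_unit X)

instance : AddCommMonoid ParQ where
  add_assoc x y z := by
    refine Quotient.inductionOn₃ x y z fun X Y Z => ?_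
    exact Quotient.sound (s := congSetoid) (Cong.par_assoc X Y Z)
  add_comm := parQ_comm
  add_zero := parQ_zero
  zero_add x := by rw [parQ_comm, parQ_zero]
  nsmul := nsmulRec

abbrev D (X Y : Struct) : Prop := Deriv BVr X Y

theorem D.refl (X : Struct) : D X X := Relation.ReflTransGen.refl

theorem D.cong {X Y : Struct} (h : Cong X Y) : D X Y := .single (.inr h)

theorem D.trans {X Y Z : Struct} (h : D X Y) (h' : D Y Z) : D X Z :=
  Relation.ReflTransGen.trans h h'

theorem D.rule {ρ : RuleName} {X Y : Struct} (hρ : BVr ρ) (h : Shallow ρ X Y) : D X Y :=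
  .single (.inl (.base ⟨ρ, hρ, h⟩))

theorem D.ctx (f : Struct → Struct)
    (hs : ∀ X Y, Step BVr X Y → Step BVr (f X) (f Y))
    (hc : ∀ X Y, Cong X Y → Cong (f X) (f Y)) {X Y : Struct} (h : D X Y) :
    D (f X) (f Y) := by
  induction h with
  | refl => exact D.refl _
  | tail _ h ih =>
    refine D.trans ih (.single ?_)
    rcases h with h | h
    · exact .inl (hs _ _ h)
    · exact .inr (hc _ _ h)

theorem D.par {X X' Y Y' : Struct} (h : D X X') (h' : D Y Y') :
    D (.par X Y) (.par X' Y') :=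
  (D.ctx (fun Z => .par Z Y) (fun _ _ h => .parL _ h)
    (fun _ _ h => .par_congr h (.refl _)) h).trans
  (D.ctx (fun Z => .par X' Z) (fun _ _ h => .parR _ h)
    (fun _ _ h => .par_congr (.refl _) h) h')

theorem D.copar {X X' Y Y' : Struct} (h : D X X') (h' : D Y Y') :
    D (.copar X Y) (.copar X' Y') :=
  (D.ctx (fun Z => .copar Z Y) (fun _ _ h => .coparL _ h)
    (fun _ _ h => .copar_congr h (.refl _)) h).trans
  (D.ctx (fun Z => .copar X' Z) (fun _ _ h => .coparR _ h)
    (fun _ _ h => .copar_congr (.refl _) h) h')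

theorem D.seq {X X' Y Y' : Struct} (h : D X X') (h' : D Y Y') :
    D (.seq X Y) (.seq X' Y') :=
  (D.ctx (fun Z => .seq Z Y) (fun _ _ h => .seqL _ h)
    (fun _ _ h => .seq_congr h (.refl _)) h).trans
  (D.ctx (fun Z => .seq X' Z) (fun _ _ h => .seqR _ h)
    (fun _ _ h => .seq_congr (.refl _) h) h')

theorem D.sw (R T U : Struct) : D (.copar (.par R U) T) (.par (.copar R T) U) :=
  D.rule (.inr (.inr (.inl rfl))) (.sw R T U)

theorem D.q (R T U V : Struct) :
    D (.seq (.par R T) (.par U V)) (.par (.seq R U) (.seq T V)) :=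
  D.rule (.inr (.inl rfl)) (.qDown R T U V)

theorem D.ai (a : ℕ) : D .unit (.par (.atom a) (.natom a)) :=
  D.rule (.inl rfl) (.aiDown a)

theorem D.pq {X Y : Struct} (h : toQ X = toQ Y) : D X Y := D.cong (cong_of_toQ h)

theorem Prov.par {X Y : Struct} (h : D .unit X) (h' : D .unit Y) : D .unit (.par X Y) :=
  (D.cong (Cong.symm (.par_unit _))).trans (D.par h h')

theorem Prov.seq {X Y : Struct} (h : D .unit X) (h' : D .unit Y) : D .unit (.seq X Y) :=
  (D.cong (Cong.symm (.seq_unit_r _))).trans (D.seq h h')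

/-- The frozen congruence makes every renaming binder vacuous. -/
theorem cong_ren (b : ℕ) (R : Struct) : Cong R (.ren b R) := by
  obtain ⟨a, ha⟩ := Infinite.exists_notMem_finset R.names
  exact (Cong.ren_intro a b R ha).trans (Cong.ren_alpha a b R ha).symm

theorem cong_fresh (a b : ℕ) (R : Struct) (ha : a ∉ R.names) : Cong R (R.rename a b) :=
  (Cong.ren_intro a b R ha).trans (cong_ren _ _).symm

/-- Hence all atoms are congruent. -/
theorem cong_atom (a b : ℕ) : Cong (.atom a) (.atom b) := by
  by_cases h : b = a
  · subst h; exact .refl _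
  · simpa [Struct.rename] using cong_fresh b a (.atom a) (by simpa [Struct.names] using h)

theorem cong_natom (a b : ℕ) : Cong (.natom a) (.natom b) := by
  by_cases h : b = a
  · subst h; exact .refl _
  · simpa [Struct.rename] using cong_fresh b a (.natom a) (by simpa [Struct.names] using h)

/-- Chu pairs of derivation-closed predicates. -/
structure Chu where
  p : Struct → Prop
  n : Struct → Prop
  upp : ∀ {X Y}, D X Y → p X → p Y
  upn : ∀ {X Y}, D X Y → n X → n Y
  perp : ∀ {X Y}, p X → n Y → D .unit (.par X Y)

namespace Chu

def dual (A : Chu) : Chu :=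
  ⟨A.n, A.p, A.upn, A.upp, fun hx hy =>
    (A.perp hy hx).trans (D.cong (.par_comm _ _))⟩

def par (A B : Chu) : Chu where
  p P := (∀ Q, A.n Q → B.p (.par P Q)) ∧ (∀ Q, B.n Q → A.p (.par P Q))
  n P := ∃ P₁ P₂, A.n P₁ ∧ B.n P₂ ∧ D (.par P₁ P₂) P
  upp h := fun ⟨h1, h2⟩ => ⟨fun Q hQ => B.upp (D.par h (D.refl _)) (h1 Q hQ),
    fun Q hQ => A.upp (D.par h (D.refl _)) (h2 Q hQ)⟩
  upn h := fun ⟨P₁, P₂, h1, h2, h3⟩ => ⟨P₁, P₂, h1, h2, h3.trans h⟩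
  perp := by
    rintro X Y ⟨h1, _⟩ ⟨P₁, P₂, h3, h4, h5⟩
    refine (B.perp (h1 _ h3) h4).trans (D.trans (D.pq ?_) (D.par (D.refl X) h5))
    simp only [toQ_par]; abel

def copar (A B : Chu) : Chu := (A.dual.par B.dual).dual

def seq (A B : Chu) : Chu where
  p P := ∃ P₁ P₂, A.p P₁ ∧ B.p P₂ ∧ D (.seq P₁ P₂) P
  n P := ∃ P₁ P₂, A.n P₁ ∧ B.n P₂ ∧ D (.seq P₁ P₂) P
  upp h := fun ⟨P₁, P₂, h1, h2, h3⟩ => ⟨P₁, P₂, h1, h2, h3.trans h⟩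
  upn h := fun ⟨P₁, P₂, h1, h2, h3⟩ => ⟨P₁, P₂, h1, h2, h3.trans h⟩
  perp := by
    rintro X Y ⟨P₁, P₂, h1, h2, h3⟩ ⟨Q₁, Q₂, k1, k2, k3⟩
    exact (Prov.seq (A.perp h1 k1) (B.perp h2 k2)).trans
      ((D.q _ _ _ _).trans (D.par h3 k3))

def one : Chu := ⟨fun P => D .unit P, fun P => D .unit P,
  fun h h' => h'.trans h, fun h h' => h'.trans h, fun h h' => Prov.par h h'⟩

def at0 : Chu := ⟨fun P => D (.natom 0) P, fun P => D (.atom 0) P,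
  fun h h' => h'.trans h, fun h h' => h'.trans h,
  fun h h' => (D.ai 0).trans ((D.cong (.par_comm _ _)).trans (D.par h h'))⟩

/-- Morphisms of Chu pairs. -/
def le (A B : Chu) : Prop := (∀ P, A.p P → B.p P) ∧ (∀ P, B.n P → A.n P)

theorem le_refl (A : Chu) : le A A := ⟨fun _ h => h, fun _ h => h⟩

theorem le_trans {A B C : Chu} (h : le A B) (h' : le B C) : le A C :=
  ⟨fun _ x => h'.1 _ (h.1 _ x), fun _ x => h.2 _ (h'.2 _ x)⟩

theorem le_dual {A B : Chu} (h : le A B) : le B.dual A.dual := ⟨h.2, h.1⟩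

theorem par_mono {A A' B B' : Chu} (h : le A A') (h' : le B B') :
    le (A.par B) (A'.par B') :=
  ⟨fun _ ⟨h1, h2⟩ => ⟨fun Q hQ => h'.1 _ (h1 Q (h.2 _ hQ)),
      fun Q hQ => h.1 _ (h2 Q (h'.2 _ hQ))⟩,
    fun _ ⟨P₁, P₂, h1, h2, h3⟩ => ⟨P₁, P₂, h.2 _ h1, h'.2 _ h2, h3⟩⟩

theorem copar_mono {A A' B B' : Chu} (h : le A A') (h' : le B B') :
    le (A.copar B) (A'.copar B') :=
  le_dual (par_mono (le_dual h) (le_dual h'))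

theorem seq_mono {A A' B B' : Chu} (h : le A A') (h' : le B B') :
    le (A.seq B) (A'.seq B') :=
  ⟨fun _ ⟨P₁, P₂, h1, h2, h3⟩ => ⟨P₁, P₂, h.1 _ h1, h'.1 _ h2, h3⟩,
    fun _ ⟨P₁, P₂, h1, h2, h3⟩ => ⟨P₁, P₂, h.2 _ h1, h'.2 _ h2, h3⟩⟩

/-- Equivalence of Chu pairs. -/
def eqv (A B : Chu) : Prop := le A B ∧ le B A

theorem eqv_dual {A B : Chu} (h : eqv A B) : eqv A.dual B.dual :=
  ⟨le_dual h.2, le_dual h.1⟩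

theorem par_comm_le (A B : Chu) : le (A.par B) (B.par A) :=
  ⟨fun _ ⟨h1, h2⟩ => ⟨h2, h1⟩,
    fun _ ⟨P₁, P₂, h1, h2, h3⟩ => ⟨P₂, P₁, h2, h1, (D.cong (.par_comm _ _)).trans h3⟩⟩

theorem par_comm (A B : Chu) : eqv (A.par B) (B.par A) :=
  ⟨par_comm_le A B, par_comm_le B A⟩

theorem par_assoc_le (A B C : Chu) : le ((A.par B).par C) (A.par (B.par C)) := by
  constructor
  · rintro P ⟨h1, h2⟩
    refine ⟨fun Q hQ => ⟨fun Q' hQ' => ?_, fun Q' hQ' => ?_⟩, ?_⟩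
    · refine C.upp (D.pq ?_) (h1 (.par Q Q') ⟨Q, Q', hQ, hQ', D.refl _⟩)
      simp only [toQ_par]; abel
    · refine B.upp (D.pq ?_) ((h2 Q' hQ').1 Q hQ)
      simp only [toQ_par]; abel
    · rintro Q ⟨Q₁, Q₂, k1, k2, k3⟩
      refine A.upp (D.trans (D.pq ?_) (D.par (D.refl P) k3)) ((h2 Q₂ k2).2 Q₁ k1)
      simp only [toQ_par]; abel
  · rintro P ⟨P₁, P₂, h1, ⟨P₃, P₄, h3, h4, h5⟩, h6⟩
    exact ⟨.par P₁ P₃, P₄, ⟨P₁, P₃, h1, h3, D.refl _⟩, h4,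
      (D.cong (.par_assoc _ _ _)).trans ((D.par (D.refl _) h5).trans h6)⟩

theorem par_assoc (A B C : Chu) : eqv ((A.par B).par C) (A.par (B.par C)) := by
  refine ⟨par_assoc_le A B C, ?_⟩
  refine le_trans (par_comm_le _ _) (le_trans (par_mono (par_comm_le _ _) (le_refl _)) ?_)
  refine le_trans (par_assoc_le C B A) ?_
  exact le_trans (par_comm_le _ _) (par_mono (par_comm_le _ _) (le_refl _))

theorem par_unit (A : Chu) : eqv (A.par one) A := by
  refine ⟨⟨fun P h => ?_, fun P h => ?_⟩, ⟨fun P h => ⟨fun Q hQ => ?_, fun Q hQ => ?_⟩, ?_⟩⟩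
  · exact A.upp (D.cong (.par_unit _)) (h.2 .unit (D.refl _))
  · exact ⟨P, .unit, h, D.refl _, D.cong (.par_unit _)⟩
  · exact A.perp h hQ
  · exact A.upp ((D.cong (Cong.symm (.par_unit _))).trans (D.par (D.refl _) hQ)) h
  · rintro P ⟨P₁, P₂, h1, h2, h3⟩
    exact A.upn ((D.cong (Cong.symm (.par_unit _))).trans ((D.par (D.refl _) h2).trans h3)) h1

theorem seq_assoc (A B C : Chu) : eqv ((A.seq B).seq C) (A.seq (B.seq C)) := by
  refine ⟨⟨?_, ?_⟩, ⟨?_, ?_⟩⟩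
  · rintro P ⟨P₁, P₂, ⟨P₃, P₄, h3, h4, h5⟩, h1, h6⟩
    exact ⟨P₃, .seq P₄ P₂, h3, ⟨_, _, h4, h1, D.refl _⟩,
      (D.cong (Cong.symm (.seq_assoc _ _ _))).trans ((D.seq h5 (D.refl _)).trans h6)⟩
  · rintro P ⟨P₁, P₂, h1, ⟨P₃, P₄, h3, h4, h5⟩, h6⟩
    exact ⟨.seq P₁ P₃, P₄, ⟨_, _, h1, h3, D.refl _⟩, h4,
      (D.cong (.seq_assoc _ _ _)).trans ((D.seq (D.refl _) h5).trans h6)⟩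
  · rintro P ⟨P₁, P₂, h1, ⟨P₃, P₄, h3, h4, h5⟩, h6⟩
    exact ⟨.seq P₁ P₃, P₄, ⟨_, _, h1, h3, D.refl _⟩, h4,
      (D.cong (.seq_assoc _ _ _)).trans ((D.seq (D.refl _) h5).trans h6)⟩
  · rintro P ⟨P₁, P₂, ⟨P₃, P₄, h3, h4, h5⟩, h1, h6⟩
    exact ⟨P₃, .seq P₄ P₂, h3, ⟨_, _, h4, h1, D.refl _⟩,
      (D.cong (Cong.symm (.seq_assoc _ _ _))).trans ((D.seq h5 (D.refl _)).trans h6)⟩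

theorem seq_unit_r (A : Chu) : eqv (A.seq one) A := by
  refine ⟨⟨?_, fun P h => ?_⟩, ⟨fun P h => ?_, ?_⟩⟩
  · rintro P ⟨P₁, P₂, h1, h2, h3⟩
    exact A.upp ((D.cong (Cong.symm (.seq_unit_r _))).trans ((D.seq (D.refl _) h2).trans h3)) h1
  · exact ⟨P, .unit, h, D.refl _, D.cong (.seq_unit_r _)⟩
  · exact ⟨P, .unit, h, D.refl _, D.cong (.seq_unit_r _)⟩
  · rintro P ⟨P₁, P₂, h1, h2, h3⟩
    exact A.upn ((D.cong (Cong.symm (.seq_unit_r _))).trans ((D.seq (D.refl _) h2).trans h3)) h1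

theorem seq_unit_l (A : Chu) : eqv (one.seq A) A := by
  refine ⟨⟨?_, fun P h => ?_⟩, ⟨fun P h => ?_, ?_⟩⟩
  · rintro P ⟨P₁, P₂, h1, h2, h3⟩
    exact A.upp ((D.cong (Cong.symm (.seq_unit_l _))).trans ((D.seq h1 (D.refl _)).trans h3)) h2
  · exact ⟨.unit, P, D.refl _, h, D.cong (.seq_unit_l _)⟩
  · exact ⟨.unit, P, D.refl _, h, D.cong (.seq_unit_l _)⟩
  · rintro P ⟨P₁, P₂, h1, h2, h3⟩
    exact A.upn ((D.cong (Cong.symm (.seq_unit_l _))).trans ((D.seq h1 (D.refl _)).trans h3)) h2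

theorem ai_le : le one (at0.par at0.dual) := by
  refine ⟨fun P h => ⟨fun Q hQ => ?_, fun Q hQ => ?_⟩, ?_⟩
  · exact D.trans hQ ((D.cong ((Cong.par_unit _).symm.trans (.par_comm _ _))).trans
      (D.par h (D.refl _)))
  · exact D.trans hQ ((D.cong ((Cong.par_unit _).symm.trans (.par_comm _ _))).trans
      (D.par h (D.refl _)))
  · rintro P ⟨P₁, P₂, h1, h2, h3⟩
    exact (D.ai 0).trans ((D.par h1 h2).trans h3)

theorem sw_le (A B C : Chu) : le ((A.par C).copar B) ((A.copar B).par C) := by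
  refine ⟨?_, ?_⟩
  · rintro P ⟨P₁, P₂, h1, h2, h3⟩
    refine ⟨fun Q hQ => ?_, fun Q hQ => ?_⟩
    · refine C.upp (D.trans (D.pq ?_) (D.par h3 (D.refl Q))) (h1.1 _ (hQ.2 P₂ h2))
      simp only [toQ_par]; abel
    · refine ⟨.par P₁ Q, P₂, h1.2 Q hQ, h2, D.trans (D.pq ?_) (D.par h3 (D.refl Q))⟩
      simp only [toQ_par]; abel
  · rintro P ⟨P₁, P₂, h1, h2, h3⟩
    refine ⟨fun Q hQ => ?_, fun Q hQ => ?_⟩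
    · refine B.upn (D.trans (D.pq ?_) (D.par h3 (D.refl Q))) (h1.1 _ (hQ.2 P₂ h2))
      simp only [toQ_par]; abel
    · refine ⟨.par P₁ Q, P₂, h1.2 Q hQ, h2, D.trans (D.pq ?_) (D.par h3 (D.refl Q))⟩
      simp only [toQ_par]; abel

theorem q_le (A B C E : Chu) :
    le ((A.par B).seq (C.par E)) ((A.seq C).par (B.seq E)) := by
  refine ⟨?_, ?_⟩
  · rintro P ⟨P₁, P₂, h1, h2, h3⟩
    refine ⟨?_, ?_⟩
    · rintro Q ⟨Q₁, Q₂, k1, k2, k3⟩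
      exact ⟨_, _, h1.1 _ k1, h2.1 _ k2, (D.q _ _ _ _).trans (D.par h3 k3)⟩
    · rintro Q ⟨Q₁, Q₂, k1, k2, k3⟩
      exact ⟨_, _, h1.2 _ k1, h2.2 _ k2, (D.q _ _ _ _).trans (D.par h3 k3)⟩
  · rintro P ⟨P₁, P₂, ⟨Q₁, Q₂, k1, k2, k3⟩, ⟨Q₃, Q₄, l1, l2, l3⟩, h3⟩
    exact ⟨.par Q₁ Q₃, .par Q₂ Q₄, ⟨_, _, k1, l1, D.refl _⟩, ⟨_, _, k2, l2, D.refl _⟩,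
      (D.q _ _ _ _).trans ((D.par k3 l3).trans h3)⟩

end Chu

open Chu

/-- Interpretation of structures. -/
def sem : Struct → Chu
  | .unit => one
  | .atom _ => at0
  | .natom _ => at0.dual
  | .par R T => (sem R).par (sem T)
  | .copar R T => (sem R).copar (sem T)
  | .seq R T => (sem R).seq (sem T)
  | .ren _ R => sem R

theorem sem_rename (a b : ℕ) (R : Struct) : sem (R.rename a b) = sem R := by
  induction R with
  | unit => rfl
  | atom c => simp only [Struct.rename]; split <;> rfl
  | natom c => simp only [Struct.rename]; split <;> rfl
  | par R T h1 h2 => simp only [Struct.rename, sem, h1, h2]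
  | copar R T h1 h2 => simp only [Struct.rename, sem, h1, h2]
  | seq R T h1 h2 => simp only [Struct.rename, sem, h1, h2]
  | ren c R h => simp only [Struct.rename]; split <;> simp only [sem, h]

theorem sem_cong {X Y : Struct} (h : Cong X Y) : eqv (sem X) (sem Y) := by
  induction h with
  | refl R => exact ⟨le_refl _, le_refl _⟩
  | symm _ h => exact ⟨h.2, h.1⟩
  | trans _ _ h h' => exact ⟨le_trans h.1 h'.1, le_trans h'.2 h.2⟩
  | par_congr _ _ h h' => exact ⟨par_mono h.1 h'.1, par_mono h.2 h'.2⟩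
  | copar_congr _ _ h h' => exact ⟨copar_mono h.1 h'.1, copar_mono h.2 h'.2⟩
  | seq_congr _ _ h h' => exact ⟨seq_mono h.1 h'.1, seq_mono h.2 h'.2⟩
  | ren_congr a _ h => exact h
  | par_comm R T => exact par_comm _ _
  | par_assoc R T U => exact par_assoc _ _ _
  | par_unit R => exact par_unit _
  | copar_comm R T => exact eqv_dual (par_comm _ _)
  | copar_assoc R T U => exact eqv_dual (par_assoc _ _ _)
  | copar_unit R => exact eqv_dual (par_unit _)
  | seq_assoc R T U => exact seq_assoc _ _ _
  | seq_unit_r R => exact seq_unit_r _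
  | seq_unit_l R => exact seq_unit_l _
  | ren_intro a b R _ => simp only [sem, sem_rename]; exact ⟨le_refl _, le_refl _⟩
  | ren_alpha a b R _ => simp only [sem, sem_rename]; exact ⟨le_refl _, le_refl _⟩
  | ren_vac a R _ => exact ⟨le_refl _, le_refl _⟩
  | ren_comm a b R => exact ⟨le_refl _, le_refl _⟩

theorem sem_step {X Y : Struct} (h : Step BVr X Y) : le (sem X) (sem Y) := by
  unfold Step at h
  induction h with
  | base h =>
    obtain ⟨ρ, hρ, h⟩ := h
    cases h with
    | aiDown a => exact ai_le
    | qDown R T U V => exact q_le _ _ _ _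
    | sw R T U => exact sw_le _ _ _
    | rDown a R T => exact le_refl _
    | aiUp a => simp [BVr] at hρ
    | qUp R T U V => simp [BVr] at hρ
    | rUp a R T => simp [BVr] at hρ
  | parL U _ h => exact par_mono h (le_refl _)
  | parR U _ h => exact par_mono (le_refl _) h
  | coparL U _ h => exact copar_mono h (le_refl _)
  | coparR U _ h => exact copar_mono (le_refl _) h
  | seqL U _ h => exact seq_mono h (le_refl _)
  | seqR U _ h => exact seq_mono (le_refl _) h
  | ren a _ h => exact h
  | congr h1 _ h2 h => exact le_trans (sem_cong h1).1 (le_trans h (sem_cong h2).1)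

theorem sem_deriv {X Y : Struct} (h : D X Y) : le (sem X) (sem Y) := by
  induction h with
  | refl => exact le_refl _
  | tail _ h ih =>
    rcases h with h | h
    · exact le_trans ih (sem_step h)
    · exact le_trans ih (sem_cong h).1

/-- The de Morgan core of reification. -/
theorem par_reify {A B : Chu} {X Y X' Y' : Struct} (hX : A.p X') (hY : B.p Y')
    (hX' : A.n X) (hY' : B.n Y)
    (kX : ∀ Q, A.n Q → D .unit (.par X' Q)) (kY : ∀ Q, B.n Q → D .unit (.par Y' Q)) :
    (A.par B).p (.copar X' Y') ∧ (A.par B).n (.par X Y) := by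
  refine ⟨⟨fun Q hQ => B.upp ?_ hY, fun Q hQ => A.upp ?_ hX⟩, X, Y, hX', hY', D.refl _⟩
  · exact (D.cong ((Cong.copar_unit _).symm.trans (.copar_comm _ _))).trans
      ((D.copar (kX Q hQ) (D.refl _)).trans (D.sw _ _ _))
  · exact (D.cong ((Cong.copar_unit _).symm.trans (.copar_comm _ _))).trans
      ((D.copar (kY Q hQ) (D.refl _)).trans ((D.sw _ _ _).trans
        (D.par (D.cong (.copar_comm _ _)) (D.refl _))))

theorem reify (X : Struct) : (sem X).p X.neg ∧ (sem X).n X := by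
  induction X with
  | unit => exact ⟨D.refl _, D.refl _⟩
  | atom a => exact ⟨D.cong (cong_natom _ _), D.cong (cong_atom _ _)⟩
  | natom a => exact ⟨D.cong (cong_atom _ _), D.cong (cong_natom _ _)⟩
  | par R T h1 h2 =>
    exact par_reify h1.1 h2.1 h1.2 h2.2 (fun Q hQ => (sem R).perp h1.1 hQ)
      (fun Q hQ => (sem T).perp h2.1 hQ)
  | copar R T h1 h2 =>
    exact (par_reify (A := (sem R).dual) (B := (sem T).dual) h1.2 h2.2 h1.1 h2.1
      (fun Q hQ => (sem R).dual.perp h1.2 hQ) (fun Q hQ => (sem T).dual.perp h2.2 hQ)).symm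
  | seq R T h1 h2 =>
    exact ⟨⟨_, _, h1.1, h2.1, D.refl _⟩, ⟨_, _, h1.2, h2.2, D.refl _⟩⟩
  | ren a R h =>
    exact ⟨(sem R).upp (D.cong (cong_ren a _)) h.1, (sem R).upn (D.cong (cong_ren a _)) h.2⟩

/-- Shallow splitting for seq in BVr. -/
theorem shallow_splitting_seq (R T P : Struct)
    (h : Prov BVr (.par (.seq R T) P)) :
    ∃ P₁ P₂ : Struct, Deriv BVr (.seq P₁ P₂) P ∧
      Prov BVr (.par R P₁) ∧ Prov BVr (.par T P₂) := by
  have h1 : (sem (.par (.seq R T) P)).p .unit := (sem_deriv h).1 _ (D.refl _)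
  obtain ⟨P₁, P₂, k1, k2, k3⟩ := h1.2 P (reify P).2
  exact ⟨P₁, P₂, D.trans k3 (D.cong ((Cong.par_comm _ _).trans (.par_unit _))),
    (sem R).dual.perp (reify R).2 k1, (sem T).dual.perp (reify T).2 k2⟩

end DI
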